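/- Let Λ = ℤ³ ⊆ ℝ³ and let X = Λ \ (2Λ ∪ (2Λ + (1,1,1))), i.e., X consists of all integer points having exactly one or exactly two odd coordinates. Then: (a) X is a Delone set with parameters r = 1/2 and R = 1, i.e., every open ball of radius 1/2 contains at most one point of X and every closed ball of radius 1 contains at least one point of X; (b) any two points of X are joined by a 1-chain in X; (c) the affine span of X is all of ℝ³; (d) for every x ∈ X the cluster C_x(1) has affine span of dimension exactly 2; (e) the group Sym(X) of isometries of ℝ³ mapping X onto X acts transitively on X. Hence X is a 1-bonded regular system with t = 1 < 2R = 2 all of whose 1-clusters have rank 2, although X has rank 3. -/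

import Mathlib

open Metric

/-- A Delone set in `ℝ^d` with parameters `r, R > 0`: every open ball of radius `r`
contains at most one point of `X` and every closed ball of radius `R` contains at
least one point of `X`. -/
def IsDeloneSet {d : ℕ} (X : Set (EuclideanSpace ℝ (Fin d))) (r R : ℝ) : Prop :=
  0 < r ∧ 0 < R ∧
    (∀ c : EuclideanSpace ℝ (Fin d), (X ∩ Metric.ball c r).Subsingleton) ∧
    (∀ c : EuclideanSpace ℝ (Fin d), (X ∩ Metric.closedBall c R).Nonempty)

/-- A `t`-chain in `X` joining `x` to `x'`: a finite sequence of points of `X`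
starting at `x`, ending at `x'`, with consecutive distances at most `t`. -/
def TChain {d : ℕ} (X : Set (EuclideanSpace ℝ (Fin d))) (t : ℝ)
    (x x' : EuclideanSpace ℝ (Fin d)) : Prop :=
  ∃ (m : ℕ) (c : ℕ → EuclideanSpace ℝ (Fin d)),
    c 0 = x ∧ c m = x' ∧ (∀ i ≤ m, c i ∈ X) ∧
    ∀ i < m, dist (c i) (c (i + 1)) ≤ t

/-- `X` is uniformly discrete: some open ball radius `r > 0` so that every open
ball of radius `r` contains at most one point of `X`. -/
def UniformlyDiscrete {d : ℕ} (X : Set (EuclideanSpace ℝ (Fin d))) : Prop :=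
  ∃ r > 0, ∀ c : EuclideanSpace ℝ (Fin d), (X ∩ Metric.ball c r).Subsingleton

/-- `X` is a `t`-bonded set: uniformly discrete, full affine span, and any two
points of `X` are joined by a `t`-chain in `X`. -/
def TBonded {d : ℕ} (X : Set (EuclideanSpace ℝ (Fin d))) (t : ℝ) : Prop :=
  UniformlyDiscrete X ∧ affineSpan ℝ X = ⊤ ∧
    ∀ x ∈ X, ∀ x' ∈ X, TChain X t x x'

/-- The `ρ`-cluster of `X` centered at `x`: points of `X` at distance at most `ρ` from `x`. -/
def cluster {d : ℕ} (X : Set (EuclideanSpace ℝ (Fin d)))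
    (x : EuclideanSpace ℝ (Fin d)) (ρ : ℝ) : Set (EuclideanSpace ℝ (Fin d)) :=
  X ∩ Metric.closedBall x ρ

/-- The symmetry group `S_x(ρ)` of the cluster `C_x(ρ)`: isometries of `ℝ^d`
fixing `x` and mapping the cluster onto itself. -/
def symmGroup {d : ℕ} (X : Set (EuclideanSpace ℝ (Fin d)))
    (x : EuclideanSpace ℝ (Fin d)) (ρ : ℝ) :
    Set (EuclideanSpace ℝ (Fin d) ≃ᵢ EuclideanSpace ℝ (Fin d)) :=
  {s | s x = x ∧ s '' cluster X x ρ = cluster X x ρ}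

/-- `Sym(X)`: the isometries of `ℝ^d` mapping `X` onto `X`. -/
def SymX {d : ℕ} (X : Set (EuclideanSpace ℝ (Fin d))) :
    Set (EuclideanSpace ℝ (Fin d) ≃ᵢ EuclideanSpace ℝ (Fin d)) :=
  {g | g '' X = X}

/-- Equivalence of the clusters `C_x(ρ)` and `C_{x'}(ρ)`: some isometry of `ℝ^d`
sends `x` to `x'` and `C_x(ρ)` onto `C_{x'}(ρ)`. -/
def ClusterEquiv {d : ℕ} (X : Set (EuclideanSpace ℝ (Fin d))) (ρ : ℝ)
    (x x' : EuclideanSpace ℝ (Fin d)) : Prop :=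
  ∃ g : EuclideanSpace ℝ (Fin d) ≃ᵢ EuclideanSpace ℝ (Fin d),
    g x = x' ∧ g '' cluster X x ρ = cluster X x' ρ

/-- The rank of the cluster `C_x(ρ)`: the dimension of its affine span. -/
noncomputable def clusterRank {d : ℕ} (X : Set (EuclideanSpace ℝ (Fin d)))
    (x : EuclideanSpace ℝ (Fin d)) (ρ : ℝ) : ℕ :=
  Module.finrank ℝ (affineSpan ℝ (cluster X x ρ)).direction

/-- The lattice `ℤ³` inside `ℝ³`. -/
def intLattice : Set (EuclideanSpace ℝ (Fin 3)) :=
  {v | ∀ i, ∃ n : ℤ, v i = (n : ℝ)}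

/-- The sublattice `2ℤ³`: points with all coordinates even integers. -/
def evenLattice : Set (EuclideanSpace ℝ (Fin 3)) :=
  {v | ∀ i, ∃ n : ℤ, v i = 2 * (n : ℝ)}

/-- The translate `2ℤ³ + (1,1,1)`: points with all coordinates odd integers. -/
def oddLattice : Set (EuclideanSpace ℝ (Fin 3)) :=
  {v | ∀ i, ∃ n : ℤ, v i = 2 * (n : ℝ) + 1}

/-- `X = ℤ³ \ (2ℤ³ ∪ (2ℤ³ + (1,1,1)))`: integer points with exactly one or exactly
two odd coordinates. -/
def X3 : Set (EuclideanSpace ℝ (Fin 3)) :=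
  intLattice \ (evenLattice ∪ oddLattice)

/-!
Everything depends only on the parities of the coordinates: `X3` is the set of integer points whose
coordinates do not all have the same parity.

* Every closed unit ball of `ℝ^d`, `d ≤ 4`, contains two integer points differing by a unit step
  along one axis, and two such points cannot both have constant parity.
* If `a i` and `a j` have different parity, all other coordinates of `a` can be changed freely in
  unit steps without leaving the set. Any two points of the set have a common such pair `i, j`, and
  a third coordinate gives the room needed to adjust `a i` and `a j` themselves.
* A point of `X3` has exactly one coordinate `k` whose parity differs from the other two. A unit
  step stays in `X3` exactly when it is not along the `k`-th axis, so the `1`-cluster spans the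
  plane orthogonal to that axis. A transposition moves `k` to any other axis, and two points with
  the same `k` differ by an integer vector of constant parity, translation by which preserves `X3`.
-/

open Function

section TChain

variable {d : ℕ} {X : Set (EuclideanSpace ℝ (Fin d))} {t : ℝ} {x y z : EuclideanSpace ℝ (Fin d)}

lemma TChain.refl (hx : x ∈ X) : TChain X t x x :=
  ⟨0, fun _ ↦ x, rfl, rfl, fun _ _ ↦ hx, by simp⟩

lemma TChain.tail (h : TChain X t x y) (hz : z ∈ X) (hyz : dist y z ≤ t) : TChain X t x z := by
  obtain ⟨m, c, hc₀, hcm, hcX, hc⟩ := h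
  refine ⟨m + 1, update c (m + 1) z, by simpa using hc₀, by simp, fun i hi ↦ ?_, fun i hi ↦ ?_⟩
  · obtain rfl | hi := hi.eq_or_lt
    · simpa using hz
    · simpa [hi.ne] using hcX i (by omega)
  · obtain rfl | him := (Nat.lt_succ_iff.1 hi).eq_or_lt
    · simpa [hcm] using hyz
    · simpa [hi.ne, him.ne] using hc i him

lemma TChain.trans (hxy : TChain X t x y) (hyz : TChain X t y z) : TChain X t x z := by
  obtain ⟨m, c, rfl, rfl, hcX, hc⟩ := hyz
  have prefix_chain : ∀ i ≤ m, TChain X t x (c i) := by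
    intro i
    induction i with
    | zero => exact fun _ ↦ hxy
    | succ i ih => exact fun hi ↦ (ih (by omega)).tail (hcX _ hi) (hc i hi)
  exact prefix_chain m le_rfl

lemma TChain.of_dist_succ_le {f : ℤ → EuclideanSpace ℝ (Fin d)} (hf : ∀ n, f n ∈ X)
    (hdist : ∀ n, dist (f n) (f (n + 1)) ≤ t) (m n : ℤ) : TChain X t (f m) (f n) := by
  have path : Relation.ReflTransGen (fun k l ↦ dist (f k) (f l) ≤ t) m n :=
    reflTransGen_of_succ _ (fun i _ ↦ hdist i) fun i _ ↦ (dist_comm _ _).trans_le (hdist i)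
  induction path with
  | refl => exact .refl (hf m)
  | tail _ hstep ih => exact ih.tail (hf _) hstep

end TChain

section Parity

variable {ι : Type*} {a b v : ι → ℤ} {i j k : ι}

/-- The coordinates of `a` do not all have the same parity; for triples of integers, exactly one or
exactly two of them are odd. -/
def MixedParity (a : ι → ℤ) : Prop :=
  ∃ i j, a i % 2 ≠ a j % 2

/-- `k` is the only index with the parity of `a k`. The other coordinates then share the opposite
parity, so this is the combinatorial type of every mixed point of `ℤ³`. -/
def LoneParity (a : ι → ℤ) (k : ι) : Prop :=
  ∀ i ≠ k, a i % 2 ≠ a k % 2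

lemma mixedParity_iff_not_forall_even_or_forall_odd :
    MixedParity a ↔ ¬((∀ i, Even (a i)) ∨ ∀ i, Odd (a i)) := by
  simp only [MixedParity, Int.even_iff, Int.odd_iff]
  constructor
  · rintro ⟨i, j, hij⟩ (h | h) <;> exact hij ((h i).trans (h j).symm)
  · intro h
    push Not at h
    obtain ⟨⟨i, hi⟩, j, hj⟩ := h
    exact ⟨i, j, by omega⟩

lemma mixedParity_congr (h : ∀ i, a i % 2 = b i % 2) : MixedParity a ↔ MixedParity b := by
  simp only [MixedParity, h]

lemma mixedParity_comp_equiv {κ : Type*} (e : κ ≃ ι) : MixedParity (a ∘ e) ↔ MixedParity a := by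
  simp only [MixedParity, comp_apply, e.exists_congr_left, e.apply_symm_apply]

lemma mixedParity_add_iff (hv : ¬ MixedParity v) : MixedParity (a + v) ↔ MixedParity a := by
  simp only [MixedParity, not_exists, not_not] at hv
  refine exists₂_congr fun i j ↦ ?_
  have := hv i j
  simp only [Pi.add_apply]
  omega

lemma MixedParity.exists_common_pair (ha : MixedParity a) (hb : MixedParity b) :
    ∃ i j, a i % 2 ≠ a j % 2 ∧ b i % 2 ≠ b j % 2 := by
  by_contra! h
  obtain ⟨i, j, hij⟩ := ha
  have const : ∀ k, b k % 2 = b i % 2 := by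
    intro k
    by_cases hk : a k % 2 = a i % 2
    · exact (h k j (by rwa [hk])).trans (h i j hij).symm
    · exact h k i hk
  obtain ⟨k, l, hkl⟩ := hb
  exact hkl ((const k).trans (const l).symm)

lemma LoneParity.not_mixedParity_sub (ha : LoneParity a k) (hb : LoneParity b k) :
    ¬ MixedParity (b - a) := by
  have const : ∀ i, (b - a) i % 2 = (b - a) k % 2 := by
    intro i
    obtain rfl | hi := eq_or_ne i k
    · rfl
    · have := ha i hi
      have := hb i hi
      simp only [Pi.sub_apply]
      omega
  rintro ⟨i, j, hij⟩
  exact hij ((const i).trans (const j).symm)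

variable [DecidableEq ι]

lemma mixedParity_update_unit (u : ℤˣ) :
    MixedParity (update a i (a i + u)) ↔ MixedParity (update a i (a i + 1)) := by
  refine mixedParity_congr fun j ↦ ?_
  obtain rfl | hj := eq_or_ne j i
  · simp only [update_self]
    obtain rfl | rfl := Int.units_eq_one_or u
    · rfl
    · simp only [Units.val_neg, Units.val_one]
      omega
  · simp [hj]

lemma mixedParity_or_mixedParity_update [Nontrivial ι] (a : ι → ℤ) (i : ι) (u : ℤˣ) :
    MixedParity a ∨ MixedParity (update a i (a i + u)) := by
  rw [mixedParity_update_unit]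
  obtain ⟨j, hj⟩ := exists_ne i
  by_cases h : a i % 2 = a j % 2
  · exact .inr ⟨i, j, by simp only [update_self, update_of_ne hj]; omega⟩
  · exact .inl ⟨i, j, h⟩

lemma mixedParity_single_unit [Nontrivial ι] (i : ι) (u : ℤˣ) :
    MixedParity (Pi.single i (u : ℤ)) := by
  obtain ⟨j, hj⟩ := exists_ne i
  refine ⟨i, j, ?_⟩
  obtain rfl | rfl := Int.units_eq_one_or u <;> simp [hj]

lemma LoneParity.not_mixedParity_update (h : LoneParity a k) :
    ¬ MixedParity (update a k (a k + 1)) := by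
  have flip : ∀ i, update a k (a k + 1) i % 2 = (a k + 1) % 2 := by
    intro i
    obtain rfl | hi := eq_or_ne i k
    · simp
    · have := h i hi
      simp only [update_of_ne hi]
      omega
  rintro ⟨i, j, hij⟩
  exact hij ((flip i).trans (flip j).symm)

lemma LoneParity.mixedParity_update_iff {d : ℕ} {a : Fin d → ℤ} {i k : Fin d} (hd : 2 < d)
    (h : LoneParity a k) : MixedParity (update a i (a i + 1)) ↔ i ≠ k := by
  refine ⟨?_, fun hik ↦ ?_⟩
  · rintro hmix rfl
    exact h.not_mixedParity_update hmix
  · obtain ⟨l, hli, hlk⟩ := Fin.exists_ne_and_ne_of_two_lt i k hd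
    exact ⟨l, k, by simpa [hli, hik.symm] using h l hlk⟩

lemma LoneParity.comp_swap (ha : LoneParity a k) (l : ι) :
    LoneParity (a ∘ Equiv.swap k l) l := by
  intro i hi
  simpa using ha (Equiv.swap k l i) (by simpa [Equiv.swap_apply_eq_iff] using hi)

lemma MixedParity.exists_loneParity {a : Fin 3 → ℤ} (h : MixedParity a) :
    ∃ k, LoneParity a k := by
  obtain ⟨i, j, hij⟩ := h
  obtain ⟨l, hli, hlj⟩ := Fin.exists_ne_and_ne_of_two_lt i j (by norm_num)
  have hne : i ≠ j := fun h ↦ hij (by rw [h])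
  have cover : ∀ m, m = i ∨ m = j ∨ m = l := by
    omega
  by_cases hl : a l % 2 = a i % 2
  · refine ⟨j, fun m hm ↦ ?_⟩
    rcases cover m with rfl | rfl | rfl <;> omega
  · refine ⟨i, fun m hm ↦ ?_⟩
    rcases cover m with rfl | rfl | rfl <;> omega

end Parity

section IntPoint

variable {d : ℕ} {a b : Fin d → ℤ}

/-- The point of `ℝ^d` with integer coordinates `a`: combinatorial arguments are carried out on
`Fin d → ℤ` and transported to Euclidean space by this map. -/
noncomputable def intPoint (a : Fin d → ℤ) : EuclideanSpace ℝ (Fin d) :=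
  WithLp.toLp 2 fun i ↦ (a i : ℝ)

@[simp]
lemma intPoint_apply (a : Fin d → ℤ) (i : Fin d) : intPoint a i = a i :=
  rfl

lemma intPoint_update (a : Fin d → ℤ) (i : Fin d) (n : ℤ) :
    intPoint (update a i n) = intPoint a + EuclideanSpace.single i ((n : ℝ) - a i) := by
  ext j
  obtain rfl | hj := eq_or_ne j i <;> simp [*]

lemma intPoint_single (i : Fin d) (n : ℤ) :
    intPoint (Pi.single i n) = EuclideanSpace.single i (n : ℝ) := by
  ext j
  obtain rfl | hj := eq_or_ne j i <;> simp [*]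

lemma dist_intPoint_update (a : Fin d → ℤ) (i : Fin d) (m n : ℤ) :
    dist (intPoint (update a i m)) (intPoint (update a i n)) = |(m : ℝ) - n| := by
  simp [intPoint_update, Real.dist_eq]

lemma dist_intPoint_sq (a b : Fin d → ℤ) :
    dist (intPoint a) (intPoint b) ^ 2 = ((∑ i, (a i - b i) ^ 2 : ℤ) : ℝ) := by
  simp [EuclideanSpace.dist_sq_eq, Real.dist_eq]

lemma one_le_dist_intPoint (h : a ≠ b) : 1 ≤ dist (intPoint a) (intPoint b) := by
  obtain ⟨i, hi⟩ := Function.ne_iff.1 h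
  calc (1 : ℝ) ≤ |((a i - b i : ℤ) : ℝ)| := mod_cast Int.one_le_abs (sub_ne_zero.2 hi)
    _ = ‖(intPoint a - intPoint b) i‖ := by simp
    _ ≤ dist (intPoint a) (intPoint b) := by
      rw [dist_eq_norm]
      exact PiLp.norm_apply_le _ i

lemma exists_eq_update_of_dist_intPoint_le_one (h : dist (intPoint a) (intPoint b) ≤ 1)
    (hab : a ≠ b) : ∃ (i : Fin d) (u : ℤˣ), b = update a i (a i + u) := by
  obtain ⟨i, hi⟩ := Function.ne_iff.1 hab
  have sum_le : (b i - a i) ^ 2 + ∑ j ∈ Finset.univ.erase i, (b j - a j) ^ 2 ≤ 1 := by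
    rw [Finset.add_sum_erase _ (fun j ↦ (b j - a j) ^ 2) (Finset.mem_univ i)]
    have : dist (intPoint b) (intPoint a) ^ 2 ≤ 1 := by
      rw [dist_comm]
      exact pow_le_one₀ dist_nonneg h
    exact_mod_cast (dist_intPoint_sq b a).symm.trans_le this
  have rest_nonneg : ∀ j ∈ Finset.univ.erase i, 0 ≤ (b j - a j) ^ 2 := fun j _ ↦ sq_nonneg _
  have step_pos : 0 < (b i - a i) ^ 2 := sq_pos_of_ne_zero (sub_ne_zero.2 hi.symm)
  have rest_eq_zero : ∑ j ∈ Finset.univ.erase i, (b j - a j) ^ 2 = 0 := by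
    linarith [Finset.sum_nonneg rest_nonneg]
  have step_unit : IsUnit (b i - a i) :=
    .of_pow_eq_one (n := 2) (by linarith) two_ne_zero
  obtain ⟨u, hu⟩ := step_unit
  refine ⟨i, u, funext fun j ↦ ?_⟩
  obtain rfl | hj := eq_or_ne j i
  · simp [hu]
  · have := (Finset.sum_eq_zero_iff_of_nonneg rest_nonneg).1 rest_eq_zero j (by simp [hj])
    rw [update_of_ne hj]
    exact sub_eq_zero.1 (sq_eq_zero_iff.1 this)

lemma exists_norm_sub_single_unit_le_one [Nonempty (Fin d)] (hd : d ≤ 4)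
    {v : EuclideanSpace ℝ (Fin d)} (hv : ∀ i, |v i| ≤ 1 / 2) :
    ‖v‖ ≤ 1 ∧ ∃ (k : Fin d) (u : ℤˣ), ‖v - EuclideanSpace.single k ((u : ℤ) : ℝ)‖ ≤ 1 := by
  obtain ⟨k, hk⟩ := Finite.exists_max fun i ↦ |v i|
  have hd' : (d : ℝ) ≤ 4 := by exact_mod_cast hd
  have norm_sq_le : ‖v‖ ^ 2 ≤ 2 * |v k| := by
    calc ‖v‖ ^ 2 = ∑ i, |v i| ^ 2 := by simp [EuclideanSpace.norm_sq_eq]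
      _ ≤ ∑ _i : Fin d, |v k| ^ 2 :=
        Finset.sum_le_sum fun i _ ↦ pow_le_pow_left₀ (abs_nonneg _) (hk i) 2
      _ = d * |v k| ^ 2 := by simp
      _ ≤ 4 * |v k| ^ 2 := by gcongr
      _ ≤ 2 * |v k| := by nlinarith [hv k, abs_nonneg (v k)]
  obtain ⟨u, hu⟩ : ∃ u : ℤˣ, ((u : ℤ) : ℝ) * v k = |v k| := by
    obtain h | h := abs_choice (v k)
    · exact ⟨1, by simp [h]⟩
    · exact ⟨-1, by simp [h]⟩
  have hu_norm : ‖((u : ℤ) : ℝ)‖ = 1 := by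
    obtain rfl | rfl := Int.units_eq_one_or u <;> simp
  have step_norm_sq :
      ‖v - EuclideanSpace.single k ((u : ℤ) : ℝ)‖ ^ 2 = ‖v‖ ^ 2 - 2 * |v k| + 1 := by
    rw [norm_sub_sq_real, EuclideanSpace.inner_single_right, PiLp.norm_single, hu_norm]
    simp [hu]
  refine ⟨(sq_le_one_iff₀ (norm_nonneg _)).1 ?_, k, u, (sq_le_one_iff₀ (norm_nonneg _)).1 ?_⟩
  · linarith [hv k]
  · linarith

lemma exists_intPoint_unit_step_mem_closedBall [Nonempty (Fin d)] (hd : d ≤ 4)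
    (x : EuclideanSpace ℝ (Fin d)) :
    ∃ (a : Fin d → ℤ) (k : Fin d) (u : ℤˣ),
      intPoint a ∈ closedBall x 1 ∧ intPoint (update a k (a k + u)) ∈ closedBall x 1 := by
  let a : Fin d → ℤ := fun i ↦ round (x i)
  obtain ⟨ha, k, u, hau⟩ := exists_norm_sub_single_unit_le_one hd (v := x - intPoint a)
    fun i ↦ abs_sub_round (x i)
  refine ⟨a, k, u, ?_, ?_⟩ <;> rw [mem_closedBall', dist_eq_norm]
  · exact ha
  · simpa [intPoint_update, sub_sub] using hau

end IntPoint

section MixedParitySet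

variable {d : ℕ} {a b : Fin d → ℤ}

/-- The integer points of `ℝ^d` whose coordinates do not all have the same parity: the analogue of
`X3` in every dimension. -/
def mixedParitySet (d : ℕ) : Set (EuclideanSpace ℝ (Fin d)) :=
  intPoint '' {a | MixedParity a}

lemma MixedParity.intPoint_mem (h : MixedParity a) : intPoint a ∈ mixedParitySet d :=
  Set.mem_image_of_mem _ h

lemma X3_eq_mixedParitySet : X3 = mixedParitySet 3 := by
  have mem_even (a : Fin 3 → ℤ) : intPoint a ∈ evenLattice ↔ ∀ i, Even (a i) :=
    forall_congr' fun i ↦ by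
      simp only [intPoint_apply, even_iff_exists_two_mul]
      norm_cast
  have mem_odd (a : Fin 3 → ℤ) : intPoint a ∈ oddLattice ↔ ∀ i, Odd (a i) :=
    forall_congr' fun i ↦ by
      simp only [intPoint_apply, Odd]
      norm_cast
  have mixed_iff (a : Fin 3 → ℤ) : intPoint a ∉ evenLattice ∪ oddLattice ↔ MixedParity a := by
    rw [Set.mem_union, mem_even, mem_odd, mixedParity_iff_not_forall_even_or_forall_odd]
  ext x
  constructor
  · rintro ⟨hint, hx⟩
    choose a ha using hint
    obtain rfl : x = intPoint a := by
      ext i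
      exact ha i
    exact ((mixed_iff a).1 hx).intPoint_mem
  · rintro ⟨a, ha, rfl⟩
    exact ⟨fun i ↦ ⟨a i, rfl⟩, (mixed_iff a).2 ha⟩

lemma isDeloneSet_mixedParitySet [Nontrivial (Fin d)] (hd : d ≤ 4) :
    IsDeloneSet (mixedParitySet d) (1 / 2) 1 := by
  refine ⟨by norm_num, one_pos, fun c ↦ ?_, fun c ↦ ?_⟩
  · rintro _ ⟨⟨a, -, rfl⟩, hac⟩ _ ⟨⟨b, -, rfl⟩, hbc⟩
    by_contra hab
    have far : 1 ≤ dist (intPoint a) (intPoint b) := one_le_dist_intPoint (ne_of_apply_ne _ hab)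
    have near : dist (intPoint a) (intPoint b) ≤ dist (intPoint a) c + dist (intPoint b) c :=
      dist_triangle_right ..
    rw [mem_ball] at hac hbc
    linarith
  · obtain ⟨a, k, u, ha, hau⟩ := exists_intPoint_unit_step_mem_closedBall hd c
    obtain hmix | hmix := mixedParity_or_mixedParity_update a k u
    · exact ⟨_, hmix.intPoint_mem, ha⟩
    · exact ⟨_, hmix.intPoint_mem, hau⟩

lemma tChain_update {i j l : Fin d} (hi : i ≠ l) (hj : j ≠ l) (hij : a i % 2 ≠ a j % 2) (n : ℤ) :
    TChain (mixedParitySet d) 1 (intPoint a) (intPoint (update a l n)) := by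
  have line_mem (m : ℤ) : intPoint (update a l m) ∈ mixedParitySet d :=
    MixedParity.intPoint_mem ⟨i, j, by simpa [hi, hj] using hij⟩
  have line_dist (m : ℤ) :
      dist (intPoint (update a l m)) (intPoint (update a l (m + 1))) ≤ 1 := by
    simp [dist_intPoint_update]
  simpa using TChain.of_dist_succ_le line_mem line_dist (a l) n

lemma tChain_of_eq_pair {i j : Fin d} (hij : a i % 2 ≠ a j % 2) (hi : a i = b i) (hj : a j = b j) :
    TChain (mixedParitySet d) 1 (intPoint a) (intPoint b) := by
  have partial_chain (s : Finset (Fin d)) (his : i ∉ s) (hjs : j ∉ s) :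
      TChain (mixedParitySet d) 1 (intPoint a) (intPoint (s.piecewise b a)) := by
    induction s using Finset.induction_on with
    | empty => simpa using TChain.refl (MixedParity.intPoint_mem ⟨i, j, hij⟩)
    | insert l s _ ih =>
      simp only [Finset.mem_insert, not_or] at his hjs
      rw [Finset.piecewise_insert]
      exact (ih his.2 hjs.2).trans
        (tChain_update his.1 hjs.1 (by simpa [his.2, hjs.2] using hij) _)
  have key := partial_chain {i, j}ᶜ (by simp) (by simp)
  have agree : ({i, j}ᶜ : Finset (Fin d)).piecewise b a = b := by
    ext l
    by_cases hl : l = i ∨ l = j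
    · obtain rfl | rfl := hl <;> simp [hi, hj]
    · rw [Finset.piecewise_eq_of_mem _ _ _ (by simpa using hl)]
  rwa [agree] at key

lemma tChain_update_of_emod_ne (hd : 2 < d) {i j : Fin d} {n : ℤ} (hij : a i % 2 ≠ a j % 2)
    (hn : n % 2 ≠ a j % 2) :
    TChain (mixedParitySet d) 1 (intPoint a) (intPoint (update a i n)) := by
  obtain ⟨l, hli, hlj⟩ := Fin.exists_ne_and_ne_of_two_lt i j hd
  have hji : j ≠ i := by rintro rfl; exact hij rfl
  -- A step along `i` leaves the set when `i` alone has its parity; separating `j`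
  -- and `l` prevents this.
  let a₁ := update a l (a j + 1)
  let a₂ := update a₁ i n
  have chain₁ : TChain (mixedParitySet d) 1 (intPoint a) (intPoint a₁) :=
    tChain_update hli.symm hlj.symm hij _
  have chain₂ : TChain (mixedParitySet d) 1 (intPoint a₁) (intPoint a₂) :=
    tChain_update hji hli (by simp [a₁, hlj.symm]; omega) _
  have chain₃ : TChain (mixedParitySet d) 1 (intPoint a₂) (intPoint (update a i n)) :=
    tChain_of_eq_pair (i := i) (j := j) (by simpa [a₂, a₁, hji, hlj.symm] using hn) (by simp [a₂])
      (by simp [a₂, a₁, hji, hlj.symm])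
  exact (chain₁.trans chain₂).trans chain₃

lemma MixedParity.tChain (hd : 2 < d) (ha : MixedParity a) (hb : MixedParity b) :
    TChain (mixedParitySet d) 1 (intPoint a) (intPoint b) := by
  obtain ⟨i, j, haij, hbij⟩ := ha.exists_common_pair hb
  obtain ⟨l, hli, hlj⟩ := Fin.exists_ne_and_ne_of_two_lt i j hd
  have hji : j ≠ i := by rintro rfl; exact haij rfl
  by_cases hba : b i % 2 = a j % 2
  · -- Here both coordinates change parity, so `i` and `j` agree midway and `l` must
    -- then differ from them.
    let a₁ := update a l (b i + 1)
    let a₂ := update a₁ i (b i)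
    let a₃ := update a₂ j (b j)
    have chain₁ : TChain (mixedParitySet d) 1 (intPoint a) (intPoint a₁) :=
      tChain_update hli.symm hlj.symm haij _
    have chain₂ : TChain (mixedParitySet d) 1 (intPoint a₁) (intPoint a₂) :=
      tChain_update hji hli (by simp [a₁, hlj.symm]; omega) _
    have chain₃ : TChain (mixedParitySet d) 1 (intPoint a₂) (intPoint a₃) :=
      tChain_update hji.symm hlj (by simp [a₂, a₁, hli]; omega) _
    have chain₄ : TChain (mixedParitySet d) 1 (intPoint a₃) (intPoint b) :=
      tChain_of_eq_pair (i := i) (j := j) (by simpa [a₃, a₂, hji.symm] using hbij)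
        (by simp [a₃, a₂, hji.symm]) (by simp [a₃])
    exact ((chain₁.trans chain₂).trans chain₃).trans chain₄
  · let a₁ := update a i (b i)
    let a₂ := update a₁ j (b j)
    have chain₁ : TChain (mixedParitySet d) 1 (intPoint a) (intPoint a₁) :=
      tChain_update_of_emod_ne hd haij hba
    have chain₂ : TChain (mixedParitySet d) 1 (intPoint a₁) (intPoint a₂) :=
      tChain_update_of_emod_ne hd (j := i) (by simp [a₁, hji]; omega)
        (by simpa [a₁] using hbij.symm)
    have chain₃ : TChain (mixedParitySet d) 1 (intPoint a₂) (intPoint b) :=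
      tChain_of_eq_pair (i := i) (j := j) (by simpa [a₂, a₁, hji.symm] using hbij)
        (by simp [a₂, a₁, hji.symm]) (by simp [a₂])
    exact (chain₁.trans chain₂).trans chain₃

lemma affineSpan_mixedParitySet [Nontrivial (Fin d)] : affineSpan ℝ (mixedParitySet d) = ⊤ := by
  have single_mem (i : Fin d) (u : ℤˣ) :
      EuclideanSpace.single i ((u : ℤ) : ℝ) ∈ mixedParitySet d := by
    rw [← intPoint_single]
    exact (mixedParity_single_unit i u).intPoint_mem
  obtain ⟨i₀⟩ := (inferInstance : Nonempty (Fin d))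
  rw [AffineSubspace.affineSpan_eq_top_iff_vectorSpan_eq_top_of_nonempty _ _ _ ⟨_, single_mem i₀ 1⟩,
    eq_top_iff, ← (EuclideanSpace.basisFun (Fin d) ℝ).toBasis.span_eq, Submodule.span_le]
  rintro _ ⟨i, rfl⟩
  have diff_mem := vsub_mem_vectorSpan ℝ (single_mem i 1) (single_mem i (-1))
  have half_diff : (EuclideanSpace.basisFun (Fin d) ℝ).toBasis i = (1 / 2 : ℝ) •
      (EuclideanSpace.single i (((1 : ℤˣ) : ℤ) : ℝ) -ᵥ
        EuclideanSpace.single i (((-1 : ℤˣ) : ℤ) : ℝ)) := by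
    ext j
    obtain rfl | hj := eq_or_ne j i
    · norm_num
    · simp [hj]
  rw [SetLike.mem_coe, half_diff]
  exact Submodule.smul_mem _ _ diff_mem

lemma MixedParity.vectorSpan_cluster (ha : MixedParity a) :
    vectorSpan ℝ (cluster (mixedParitySet d) (intPoint a) 1) =
      Submodule.span ℝ ((fun i ↦ EuclideanSpace.single i (1 : ℝ)) ''
        {i | MixedParity (update a i (a i + 1))}) := by
  have center_mem : intPoint a ∈ cluster (mixedParitySet d) (intPoint a) 1 :=
    ⟨ha.intPoint_mem, by simp⟩
  apply le_antisymm
  · rw [vectorSpan_eq_span_vsub_set_right ℝ center_mem, Submodule.span_le]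
    rintro _ ⟨_, ⟨⟨b, hb, rfl⟩, hdist⟩, rfl⟩
    obtain rfl | hab := eq_or_ne a b
    · simp
    obtain ⟨i, u, rfl⟩ := exists_eq_update_of_dist_intPoint_le_one (mem_closedBall'.1 hdist) hab
    have diff_eq : intPoint (update a i (a i + u)) -ᵥ intPoint a =
        ((u : ℤ) : ℝ) • EuclideanSpace.single i (1 : ℝ) := by
      ext j
      simp [intPoint_update]
    change intPoint (update a i (a i + u)) -ᵥ intPoint a ∈ _
    rw [diff_eq]
    exact Submodule.smul_mem _ _
      (Submodule.subset_span ⟨i, (mixedParity_update_unit u).1 hb, rfl⟩)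
  · rw [Submodule.span_le]
    rintro _ ⟨i, hi, rfl⟩
    have neighbor_mem :
        intPoint (update a i (a i + 1)) ∈ cluster (mixedParitySet d) (intPoint a) 1 :=
      ⟨MixedParity.intPoint_mem hi, by simp [intPoint_update]⟩
    simpa [intPoint_update] using vsub_mem_vectorSpan ℝ neighbor_mem center_mem

lemma MixedParity.clusterRank_eq_card (ha : MixedParity a) :
    clusterRank (mixedParitySet d) (intPoint a) 1 =
      Nat.card {i // MixedParity (update a i (a i + 1))} := by
  classical
  have indep : LinearIndependent ℝ
      fun i : {i // MixedParity (update a i (a i + 1))} ↦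
        EuclideanSpace.single (i : Fin d) (1 : ℝ) :=
    EuclideanSpace.orthonormal_single.linearIndependent.comp _ Subtype.val_injective
  rw [clusterRank, direction_affineSpan, ha.vectorSpan_cluster, Set.image_eq_range]
  exact (finrank_span_eq_card indep).trans Nat.card_eq_fintype_card.symm

lemma LoneParity.clusterRank_eq (hd : 2 < d) {k : Fin d} (h : LoneParity a k) :
    clusterRank (mixedParitySet d) (intPoint a) 1 = d - 1 := by
  obtain ⟨i, hi, -⟩ := Fin.exists_ne_and_ne_of_two_lt k k hd
  have ha : MixedParity a := ⟨i, k, h i hi⟩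
  simp [ha.clusterRank_eq_card, h.mixedParity_update_iff hd]

lemma mem_symX_mixedParitySet {g : EuclideanSpace ℝ (Fin d) ≃ᵢ EuclideanSpace ℝ (Fin d)}
    (e : (Fin d → ℤ) ≃ (Fin d → ℤ)) (hg : ∀ a, g (intPoint a) = intPoint (e a))
    (he : ∀ a, MixedParity (e a) ↔ MixedParity a) : g ∈ SymX (mixedParitySet d) := by
  have image_e : e '' {a | MixedParity a} = {a | MixedParity a} := by
    ext b
    simp [e.image_eq_preimage_symm, ← he (e.symm b)]
  calc g '' (intPoint '' {a | MixedParity a}) = intPoint '' (e '' {a | MixedParity a}) := by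
        simp only [Set.image_image, hg]
    _ = intPoint '' {a | MixedParity a} := by rw [image_e]

lemma LoneParity.exists_mem_symX {k l : Fin d} (ha : LoneParity a k) (hb : LoneParity b l) :
    ∃ g ∈ SymX (mixedParitySet d), g (intPoint a) = intPoint b := by
  let σ := Equiv.swap k l
  let v := b - a ∘ σ
  have hv : ¬ MixedParity v := (ha.comp_swap l).not_mixedParity_sub hb
  let g := (LinearIsometryEquiv.piLpCongrLeft 2 ℝ ℝ σ).toIsometryEquiv.trans
    (IsometryEquiv.addRight (intPoint v))
  let e : (Fin d → ℤ) ≃ (Fin d → ℤ) := (σ.arrowCongr (Equiv.refl ℤ)).trans (Equiv.addRight v)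
  have e_apply (c : Fin d → ℤ) : e c = c ∘ σ + v := rfl
  have g_apply (c : Fin d → ℤ) : g (intPoint c) = intPoint (e c) := by
    ext i
    simp [g, e, LinearIsometryEquiv.piLpCongrLeft_apply, Equiv.piCongrLeft'_apply]
  have he (c : Fin d → ℤ) : MixedParity (e c) ↔ MixedParity c := by
    rw [e_apply, mixedParity_add_iff hv, mixedParity_comp_equiv]
  exact ⟨g, mem_symX_mixedParitySet e g_apply he, by rw [g_apply, e_apply, add_sub_cancel]⟩

end MixedParitySet

/-- `X = ℤ³ \ (2ℤ³ ∪ (2ℤ³ + (1,1,1)))` is (a) a Delone set with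
parameters `r = 1/2`, `R = 1`; (b) `1`-chain connected; (c) of full affine span `ℝ³`;
(d) all its `1`-clusters have rank exactly `2`; and (e) `Sym(X)` acts transitively
on it. -/
theorem X3_properties :
    IsDeloneSet X3 (1 / 2) 1 ∧
    (∀ x ∈ X3, ∀ x' ∈ X3, TChain X3 1 x x') ∧
    affineSpan ℝ X3 = ⊤ ∧
    (∀ x ∈ X3, clusterRank X3 x 1 = 2) ∧
    (∀ x ∈ X3, ∀ x' ∈ X3, ∃ g ∈ SymX X3, g x = x') := by
  rw [X3_eq_mixedParitySet]
  refine ⟨isDeloneSet_mixedParitySet (by norm_num), ?chains, affineSpan_mixedParitySet, ?ranks,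
    ?transitive⟩
  case chains =>
    rintro _ ⟨a, ha, rfl⟩ _ ⟨b, hb, rfl⟩
    exact ha.tChain (by norm_num) hb
  case ranks =>
    rintro _ ⟨a, ha, rfl⟩
    obtain ⟨k, hk⟩ := MixedParity.exists_loneParity ha
    exact hk.clusterRank_eq (by norm_num)
  case transitive =>
    rintro _ ⟨a, ha, rfl⟩ _ ⟨b, hb, rfl⟩
    obtain ⟨k, hk⟩ := MixedParity.exists_loneParity ha
    obtain ⟨l, hl⟩ := MixedParity.exists_loneParity hb
    exact hk.exists_mem_symX hl
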